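/- For every integer n ≥ 4, the graph Γ_{D_n} admits a cycle double cover consisting of 2n+2 cycles, namely: for each i ∈ ℤ/nℤ the triangle (a_i,b_i,c_i) and the 6-cycle (a_i,c_i,d_i,d_{i+1},c_{i+1},b_{i+1}); the n-cycle (d_1,d_2,…,d_n); and one 2n-cycle through all vertices a_j and b_j which alternately traverses the edges {a_j,b_j} and {a_j,b_{j+1}}. In particular every edge of Γ_{D_n} lies on exactly two of these cycles. -/

import Mathlib

/-- The graph `Γ_{D_n}` on vertex set `{a,b,c,d} × (ℤ/nℤ)` (the labels `a,b,c,d` are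
encoded as `0,1,2,3 : Fin 4`), with edges, for every `i`:
`{a_i,b_i}, {a_i,c_i}, {b_i,c_i}, {c_i,d_i}, {a_i,b_{i+1}}, {d_i,d_{i+1}}`. -/
def dnGraph (n : ℕ) : SimpleGraph (Fin 4 × ZMod n) :=
  SimpleGraph.fromEdgeSet (⋃ i : ZMod n,
    {s((0, i), (1, i)), s((0, i), (2, i)), s((1, i), (2, i)),
     s((2, i), (3, i)), s((0, i), (1, i + 1)), s((3, i), (3, i + 1))})

/-- The edges of a vertex list regarded as a closed cyclic sequence. -/
def cycleEdges {V : Type*} (l : List V) : List (Sym2 V) :=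
  List.zipWith (fun a b => s(a, b)) l (l.rotate 1)

/-- `l` is a cycle of `Γ`: at least three pairwise distinct vertices, any two cyclically
consecutive ones being adjacent in `Γ`. -/
def IsCycleList {V : Type*} (Γ : SimpleGraph V) (l : List V) : Prop :=
  3 ≤ l.length ∧ l.Nodup ∧ ∀ e ∈ cycleEdges l, e ∈ Γ.edgeSet

open scoped Classical in
/-- A cycle double cover: a family of cycles, counted with multiplicity, such that every
edge of `Γ` lies on exactly two members of the family. -/
def IsCycleDoubleCover {V : Type*} (Γ : SimpleGraph V) (cs : Multiset (List V)) : Prop :=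
  (∀ l ∈ cs, IsCycleList Γ l) ∧
  ∀ e ∈ Γ.edgeSet, (cs.map fun l => if e ∈ cycleEdges l then 1 else 0).sum = 2

open scoped Classical in
/-- The explicit cycle double cover of `Γ_{D_n}`: for each `i` the triangle
`(a_i,b_i,c_i)` and the `6`-cycle `(a_i,c_i,d_i,d_{i+1},c_{i+1},b_{i+1})`; the `n`-cycle
`(d_1,…,d_n)`; and one `2n`-cycle through all the `a_j` and `b_j` alternately traversing
the edges `{a_j,b_j}` and `{a_j,b_{j+1}}`. -/
noncomputable def dnCDC (n : ℕ) [NeZero n] : Multiset (List (Fin 4 × ZMod n)) :=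
  (Finset.univ : Finset (ZMod n)).val.map
    (fun i => [((0 : Fin 4), i), (1, i), (2, i)]) +
  (Finset.univ : Finset (ZMod n)).val.map
    (fun i => [((0 : Fin 4), i), (2, i), (3, i), (3, i + 1), (2, i + 1), (1, i + 1)]) +
  {(List.range n).map fun k => ((3 : Fin 4), (k : ZMod n)),
   (List.range n).flatMap fun k =>
     [((0 : Fin 4), -(k : ZMod n)), (1, -(k : ZMod n))]}

theorem cycleEdges_range_map {V : Type*} (m : ℕ) (f : ℕ → V) (h : f m = f 0) :
    cycleEdges ((List.range m).map f) = (List.range m).map (fun k => s(f k, f (k + 1))) := by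
  apply List.ext_getElem
  · simp [cycleEdges]
  · intro i h1 h2
    simp only [List.length_map, List.length_range] at h2
    simp only [cycleEdges, List.getElem_zipWith, List.getElem_rotate, List.getElem_map,
      List.getElem_range, List.length_map, List.length_range]
    rcases Nat.lt_or_ge (i + 1) m with h3 | h3
    · rw [Nat.mod_eq_of_lt h3]
    · have : i + 1 = m := by omega
      rw [this, Nat.mod_self, h]

theorem castList_eq (n m : ℕ) :
    ((List.range m : List ℕ) >>= fun a => pure (a : ZMod n)) =
      (List.range m).map (fun k : ℕ => (k : ZMod n)) := by
  simp only [List.bind_eq_flatMap, List.pure_def]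
  exact List.map_eq_flatMap.symm

theorem D_eq (n : ℕ) :
    ((List.range n).map fun k => ((3 : Fin 4), (k : ZMod n))) =
      (List.range n).map (fun k : ℕ => ((3 : Fin 4), (k : ZMod n))) := by
  rw [castList_eq, List.map_map]
  rfl

theorem flatMap_eq_map (n m : ℕ) :
    ((List.range m).flatMap fun k =>
     [((0 : Fin 4), -(k : ZMod n)), (1, -(k : ZMod n))]) =
    (List.range (2 * m)).map
      (fun j => ((if j % 2 = 0 then 0 else 1 : Fin 4), -((j / 2 : ℕ) : ZMod n))) := by
  rw [castList_eq, List.flatMap_map]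
  induction m with
  | zero => simp
  | succ m ih =>
    rw [List.range_succ, List.flatMap_append, ih,
      show 2 * (m + 1) = 2 * m + 1 + 1 by ring, List.range_succ, List.range_succ]
    have h1 : (2 * m + 1) / 2 = m := by omega
    have h2 : (2 * m + 1) % 2 = 1 := by omega
    simp [h1, h2]

theorem mem_D (n : ℕ) [NeZero n] (e : Sym2 (Fin 4 × ZMod n)) :
    e ∈ cycleEdges ((List.range n).map fun k => ((3 : Fin 4), (k : ZMod n))) ↔
      ∃ i : ZMod n, e = s((3, i), (3, i + 1)) := by
  rw [D_eq, cycleEdges_range_map _ _ (by simp)]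
  simp only [List.mem_map, List.mem_range]
  constructor
  · rintro ⟨k, _, rfl⟩
    exact ⟨k, by push_cast; rfl⟩
  · rintro ⟨i, rfl⟩
    exact ⟨i.val, ZMod.val_lt i, by simp⟩

theorem mem_AB (n : ℕ) [NeZero n] (e : Sym2 (Fin 4 × ZMod n)) :
    e ∈ cycleEdges ((List.range n).flatMap fun k =>
     [((0 : Fin 4), -(k : ZMod n)), (1, -(k : ZMod n))]) ↔
      ∃ i : ZMod n, e = s((0, i), (1, i)) ∨ e = s((0, i), (1, i + 1)) := by
  rw [flatMap_eq_map, cycleEdges_range_map _ _ (by simp)]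
  simp only [List.mem_map, List.mem_range]
  constructor
  · rintro ⟨k, _, rfl⟩
    obtain ⟨t, rfl | rfl⟩ : ∃ t, k = 2 * t ∨ k = 2 * t + 1 := ⟨k / 2, by omega⟩
    · refine ⟨-(t : ZMod n), Or.inl ?_⟩
      have h1 : (2 * t + 1) / 2 = t := by omega
      have h2 : (2 * t + 1) % 2 = 1 := by omega
      simp [h1, h2]
    · refine ⟨-((t + 1 : ℕ) : ZMod n), Or.inr ?_⟩
      have h1 : (2 * t + 1) / 2 = t := by omega
      have h2 : (2 * t + 1) % 2 = 1 := by omega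
      have h3 : (2 * t + 1 + 1) / 2 = t + 1 := by omega
      have h4 : (2 * t + 1 + 1) % 2 = 0 := by omega
      rw [Sym2.eq_swap]
      simp [h1, h2, h3, h4]
  · rintro ⟨i, rfl | rfl⟩
    · have hlt := ZMod.val_lt (-i)
      refine ⟨2 * (-i).val, by omega, ?_⟩
      have h1 : (2 * (-i).val + 1) / 2 = (-i).val := by omega
      have h2 : (2 * (-i).val + 1) % 2 = 1 := by omega
      simp only [h1, h2, Nat.mul_mod_right, Nat.mul_div_cancel_left _ (Nat.succ_pos 1),
        ZMod.natCast_zmod_val]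
      simp
    · have hlt := ZMod.val_lt (-i - 1)
      refine ⟨2 * (-i - 1).val + 1, by omega, ?_⟩
      have h1 : (2 * (-i - 1).val + 1) / 2 = (-i - 1).val := by omega
      have h2 : (2 * (-i - 1).val + 1) % 2 = 1 := by omega
      have h3 : (2 * (-i - 1).val + 1 + 1) / 2 = (-i - 1).val + 1 := by omega
      have h4 : (2 * (-i - 1).val + 1 + 1) % 2 = 0 := by omega
      rw [Sym2.eq_swap]
      simp only [h1, h2, h3, h4, Nat.cast_add, ZMod.natCast_zmod_val]
      simp [add_comm]

theorem mem_dn (n : ℕ) (h10 : (1 : ZMod n) ≠ 0) (e : Sym2 (Fin 4 × ZMod n)) :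
    e ∈ (dnGraph n).edgeSet ↔ ∃ i : ZMod n, e = s((0, i), (1, i)) ∨ e = s((0, i), (2, i)) ∨
      e = s((1, i), (2, i)) ∨ e = s((2, i), (3, i)) ∨ e = s((0, i), (1, i + 1)) ∨
      e = s((3, i), (3, i + 1)) := by
  simp only [dnGraph, SimpleGraph.edgeSet_fromEdgeSet, Set.mem_sdiff, Set.mem_iUnion,
    Set.mem_insert_iff, Set.mem_singleton_iff]
  constructor
  · exact fun h => h.1
  · rintro ⟨i, h⟩
    refine ⟨⟨i, h⟩, ?_⟩
    rcases h with rfl | rfl | rfl | rfl | rfl | rfl <;> simp [h10]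

theorem mem_tri {n : ℕ} (i : ZMod n) (e : Sym2 (Fin 4 × ZMod n)) :
    e ∈ cycleEdges [((0 : Fin 4), i), (1, i), (2, i)] ↔
      e = s((0, i), (1, i)) ∨ e = s((1, i), (2, i)) ∨ e = s((0, i), (2, i)) := by
  simp [cycleEdges, Sym2.eq_swap (a := ((2 : Fin 4), i))]

theorem mem_hex {n : ℕ} (i : ZMod n) (e : Sym2 (Fin 4 × ZMod n)) :
    e ∈ cycleEdges [((0 : Fin 4), i), (2, i), (3, i), (3, i + 1), (2, i + 1), (1, i + 1)] ↔
      e = s((0, i), (2, i)) ∨ e = s((2, i), (3, i)) ∨ e = s((3, i), (3, i + 1)) ∨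
      e = s((2, i + 1), (3, i + 1)) ∨ e = s((1, i + 1), (2, i + 1)) ∨
      e = s((0, i), (1, i + 1)) := by
  simp [cycleEdges, Sym2.eq_swap (a := ((3 : Fin 4), i + 1)) (b := ((2 : Fin 4), i + 1)),
    Sym2.eq_swap (a := ((2 : Fin 4), i + 1)) (b := ((1 : Fin 4), i + 1)),
    Sym2.eq_swap (a := ((1 : Fin 4), i + 1)) (b := ((0 : Fin 4), i))]

/-- For `n ≥ 4`, the family `dnCDC n` of `2n+2` explicit cycles is a cycle double cover
of `Γ_{D_n}`: every edge lies on exactly two of these cycles. -/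
theorem dnCDC_isCycleDoubleCover (n : ℕ) [NeZero n] (hn : 4 ≤ n) :
    IsCycleDoubleCover (dnGraph n) (dnCDC n) ∧ Multiset.card (dnCDC n) = 2 * n + 2 := by
  have h10 : (1 : ZMod n) ≠ 0 := by
    intro h
    have h' : ((1 : ℕ) : ZMod n) = 0 := by simpa using h
    rw [ZMod.natCast_eq_zero_iff] at h'
    have := Nat.le_of_dvd (by norm_num) h'
    omega
  have h20 : (1 + 1 : ZMod n) ≠ 0 := by
    intro h
    have h' : ((2 : ℕ) : ZMod n) = 0 := by rw [← h]; norm_num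
    rw [ZMod.natCast_eq_zero_iff] at h'
    have := Nat.le_of_dvd (by norm_num) h'
    omega
  have inj : ∀ a < n, ∀ b < n, (a : ZMod n) = b → a = b := by
    intro a ha b hb h
    rw [ZMod.natCast_eq_natCast_iff', Nat.mod_eq_of_lt ha, Nat.mod_eq_of_lt hb] at h
    exact h
  refine ⟨⟨?_, ?_⟩, ?_⟩
  · intro l hl
    simp only [dnCDC, Multiset.mem_add, Multiset.mem_map, Multiset.insert_eq_cons,
      Multiset.mem_cons, Multiset.mem_singleton] at hl
    rcases hl with (⟨i, _, rfl⟩ | ⟨i, _, rfl⟩) | rfl | rfl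
    · refine ⟨by simp, by simp, ?_⟩
      intro e he
      rw [mem_tri] at he
      rw [mem_dn n h10]
      exact ⟨i, by tauto⟩
    · refine ⟨by simp, by simp [h10], ?_⟩
      intro e he
      rw [mem_hex] at he
      rw [mem_dn n h10]
      rcases he with h | h | h | h | h | h
      · exact ⟨i, by tauto⟩
      · exact ⟨i, by tauto⟩
      · exact ⟨i, by tauto⟩
      · exact ⟨i + 1, by tauto⟩
      · exact ⟨i + 1, by tauto⟩
      · exact ⟨i, by tauto⟩
    · refine ⟨by rw [D_eq]; simp; omega, ?_, ?_⟩
      · rw [D_eq]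
        refine List.Nodup.map_on ?_ List.nodup_range
        intro a ha b hb h
        rw [List.mem_range] at ha hb
        exact inj a ha b hb (Prod.mk.inj h).2
      · intro e he
        rw [mem_D] at he
        rw [mem_dn n h10]
        obtain ⟨i, h⟩ := he
        exact ⟨i, by tauto⟩
    · refine ⟨?_, ?_, ?_⟩
      · rw [flatMap_eq_map]; simp; omega
      · rw [flatMap_eq_map]
        refine List.Nodup.map_on ?_ List.nodup_range
        intro a ha b hb h
        rw [List.mem_range] at ha hb
        have h1 := (Prod.mk.inj h).1
        have h2 := inj _ (by omega) _ (by omega) (neg_injective (Prod.mk.inj h).2)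
        have h3 : a % 2 = b % 2 := by
          split_ifs at h1 <;> first | omega | simp at h1
        omega
      · intro e he
        rw [mem_AB] at he
        rw [mem_dn n h10]
        obtain ⟨i, h⟩ := he
        exact ⟨i, by tauto⟩
  · intro e he
    rw [mem_dn n h10] at he
    have key : ∀ x y : ZMod n, x = y + 1 → y = x + 1 → False := by
      intro x y h1 h2
      apply h20
      linear_combination -h1 - h2
    have hs : ∀ j i : ZMod n, j = i + 1 ↔ i = j - 1 := by
      intro j i
      constructor
      · intro h; rw [h]; ring
      · intro h; rw [h]; ring
    simp only [dnCDC, Multiset.map_add, Multiset.map_map, Function.comp_def, mem_tri, mem_hex,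
      Multiset.insert_eq_cons, Multiset.map_cons, Multiset.map_singleton, mem_D, mem_AB,
      Multiset.sum_add, Multiset.sum_cons, Multiset.sum_singleton]
    change (∑ i : ZMod n, _) + (∑ i : ZMod n, _) + _ = 2
    simp only [← Finset.card_filter]
    obtain ⟨j, rfl | rfl | rfl | rfl | rfl | rfl⟩ := he
    · simp [Finset.filter_eq, h10]
    · simp [Finset.filter_eq]
    · simp [Finset.filter_eq, Finset.filter_eq', hs]
    · simp [hs, Finset.filter_or, Finset.filter_eq, Finset.filter_eq']
      refine Finset.card_pair ?_
      intro h
      apply h10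
      linear_combination h
    · simp [Finset.filter_eq, h10]
    · have h : ∀ x : ZMod n, (j = x ∨ j = x + 1 ∧ j + 1 = x) ↔ j = x := fun x =>
        ⟨fun h => h.elim id fun h => (key _ _ h.1 h.2.symm).elim, Or.inl⟩
      simp [h, Finset.filter_eq]
  · simp [dnCDC, two_mul]
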